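/- (Patchwork theorem.) Let X be a finite simplicial complex, let P be a poset, and let φ : X → P be an order-preserving map (where the simplices of X are ordered by inclusion). Suppose that for every p ∈ P we are given an acyclic matching M_p on the subposet φ^{-1}(p), i.e., a matching consisting of arcs of H(X) with both endpoints in φ^{-1}(p) such that reversing its arcs in the induced subgraph of H(X) on φ^{-1}(p) creates no directed cycle. Then the union of the matchings M_p over all p ∈ P is an acyclic matching on X. -/

import Mathlib

open Finset

/-- A (finite) simplicial complex: a finite collection of nonempty finite sets
    of vertices, closed under taking nonempty subsets. -/
def IsComplex {U : Type*} [DecidableEq U] (X : Finset (Finset U)) : Prop :=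
  (∀ σ ∈ X, σ ≠ ∅) ∧ ∀ σ ∈ X, ∀ τ : Finset U, τ ⊆ σ → τ ≠ ∅ → τ ∈ X

/-- Arc of the Hasse diagram `H(X)`: from `σ` to `τ` iff `τ ⊂ σ` and
    `dim σ = dim τ + 1` (i.e. `|σ| = |τ| + 1`). -/
def HasseArc {U : Type*} [DecidableEq U] (X : Finset (Finset U)) (σ τ : Finset U) : Prop :=
  σ ∈ X ∧ τ ∈ X ∧ τ ⊂ σ ∧ σ.card = τ.card + 1

/-- A matching on `X`: a set of arcs of `H(X)` such that every simplex of `X`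
    belongs to at most one arc. -/
def IsMatching {U : Type*} [DecidableEq U] (X : Finset (Finset U))
    (M : Set (Finset U × Finset U)) : Prop :=
  (∀ p ∈ M, HasseArc X p.1 p.2) ∧
  ∀ p ∈ M, ∀ q ∈ M, p ≠ q → p.1 ≠ q.1 ∧ p.1 ≠ q.2 ∧ p.2 ≠ q.1 ∧ p.2 ≠ q.2

/-- Arc of the modified Hasse diagram `H(X)^M`, obtained from `H(X)` by
    reversing the direction of each arc in `M`. -/
def ModArc {U : Type*} [DecidableEq U] (X : Finset (Finset U))
    (M : Set (Finset U × Finset U)) (a b : Finset U) : Prop :=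
  (HasseArc X a b ∧ (a, b) ∉ M) ∨ (b, a) ∈ M

/-- An acyclic matching: a matching such that `H(X)^M` has no directed cycle. -/
def IsAcyclicMatching {U : Type*} [DecidableEq U] (X : Finset (Finset U))
    (M : Set (Finset U × Finset U)) : Prop :=
  IsMatching X M ∧ ∀ a : Finset U, ¬ Relation.TransGen (ModArc X M) a a

/-- `σ` is a critical simplex of the matching `M` on `X`: it belongs to no arc of `M`. -/
def IsCritical {U : Type*} [DecidableEq U] (X : Finset (Finset U))
    (M : Set (Finset U × Finset U)) (σ : Finset U) : Prop :=
  σ ∈ X ∧ ∀ p ∈ M, p.1 ≠ σ ∧ p.2 ≠ σ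

/-- `X` has dimension exactly `d` (the dimension of a simplex `σ` is `|σ| - 1`). -/
def HasDim {U : Type*} [DecidableEq U] (X : Finset (Finset U)) (d : ℕ) : Prop :=
  (∀ σ ∈ X, σ.card ≤ d + 1) ∧ ∃ σ ∈ X, σ.card = d + 1

/-- The complex `X' = X ∪ { σ ∪ {wᵢ} : σ ∈ X ∪ {∅}, i = 1, …, n+1 }`, obtained
    from `X` by attaching `n+1` cones with apexes `w 0, …, w n`. -/
def coneCx {U : Type*} [DecidableEq U] (X : Finset (Finset U)) (n : ℕ)
    (w : Fin (n + 1) → U) : Finset (Finset U) :=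
  X ∪ Finset.univ.biUnion (fun i : Fin (n + 1) =>
    (insert (∅ : Finset U) X).image (fun σ => insert (w i) σ))

/-
Along any arc of the modified Hasse diagram of the union of the matchings the value of `φ` can
only decrease: an unreversed arc goes to a face, and a reversed arc stays in its fiber. Hence `φ` is
constant on a directed cycle, so every cycle lies in a single fiber, where the union of the
matchings agrees with one `M p`.
-/

section ArcMatching

variable {V P : Type*} {r : V → V → Prop} {φ : V → P} {M : P → Set (V × V)}

/-- Arcs of the subgraph of the directed graph `r` induced on the vertex set `S`. Vertices outside
`S` are kept, as isolated vertices, so that no subtype is needed. -/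
def InducedArc (r : V → V → Prop) (S : Set V) (a b : V) : Prop :=
  a ∈ S ∧ b ∈ S ∧ r a b

/-- Arcs of the directed graph obtained from `r` by reversing the arcs in `M`; `ModArc X` is the
case `r = HasseArc X`. -/
def ReversedArc (r : V → V → Prop) (M : Set (V × V)) (a b : V) : Prop :=
  (r a b ∧ (a, b) ∉ M) ∨ (b, a) ∈ M

/-- Two arcs, given as ordered pairs of vertices, are vertex-disjoint if they have no common
endpoint. -/
def VertexDisjoint (e f : V × V) : Prop :=
  e.1 ≠ f.1 ∧ e.1 ≠ f.2 ∧ e.2 ≠ f.1 ∧ e.2 ≠ f.2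

/-- A matching of the directed graph `r`: a set of pairwise vertex-disjoint arcs. -/
def IsArcMatching (r : V → V → Prop) (M : Set (V × V)) : Prop :=
  (∀ e ∈ M, r e.1 e.2) ∧ M.Pairwise VertexDisjoint

/-- An acyclic matching of the directed graph `r`: reversing its arcs leaves no directed cycle.
`IsAcyclicMatching X` is the case `r = HasseArc X`. -/
def IsAcyclicArcMatching (r : V → V → Prop) (M : Set (V × V)) : Prop :=
  IsArcMatching r M ∧ ∀ a, ¬ Relation.TransGen (ReversedArc r M) a a

theorem reversedArc_inducedArc (r : V → V → Prop) (N : Set (V × V)) (S : Set V) :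
    ReversedArc (InducedArc r S) (N ∩ S ×ˢ S) = InducedArc (ReversedArc r N) S := by
  ext a b
  simp only [ReversedArc, InducedArc, Set.mem_inter_iff, Set.mem_prod]
  tauto

theorem reversedArc_inducedArc_of_subset {N : Set (V × V)} {S : Set V} (hN : N ⊆ S ×ˢ S) :
    ReversedArc (InducedArc r S) N = InducedArc (ReversedArc r N) S := by
  rw [← reversedArc_inducedArc, Set.inter_eq_left.2 hN]

theorem iUnion_inter_fiber_prod_fiber (hM : ∀ p, M p ⊆ (φ ⁻¹' {p}) ×ˢ (φ ⁻¹' {p})) (p : P) :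
    (⋃ q, M q) ∩ (φ ⁻¹' {p}) ×ˢ (φ ⁻¹' {p}) = M p := by
  refine Set.Subset.antisymm ?_ (Set.subset_inter (Set.subset_iUnion M p) (hM p))
  rintro e ⟨he, hep, -⟩
  obtain ⟨q, heM⟩ := Set.mem_iUnion.1 he
  obtain rfl : q = p := (hM q heM).1.symm.trans hep
  exact heM

theorem VertexDisjoint.of_mem_fiber_prod_fiber {p q : P} (hpq : p ≠ q) {e f : V × V}
    (he : e ∈ (φ ⁻¹' {p}) ×ˢ (φ ⁻¹' {p})) (hf : f ∈ (φ ⁻¹' {q}) ×ˢ (φ ⁻¹' {q})) :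
    VertexDisjoint e f := by
  have ne_of_mem {x y : V} (hx : x ∈ φ ⁻¹' {p}) (hy : y ∈ φ ⁻¹' {q}) : x ≠ y := by
    rintro rfl
    exact hpq (hx.symm.trans hy)
  exact ⟨ne_of_mem he.1 hf.1, ne_of_mem he.1 hf.2, ne_of_mem he.2 hf.1, ne_of_mem he.2 hf.2⟩

theorem IsArcMatching.subset_prod {S : Set V} {N : Set (V × V)}
    (hN : IsArcMatching (InducedArc r S) N) : N ⊆ S ×ˢ S :=
  fun e he => ⟨(hN.1 e he).1, (hN.1 e he).2.1⟩

theorem IsArcMatching.iUnion_fiber (hM : ∀ p, IsArcMatching (InducedArc r (φ ⁻¹' {p})) (M p)) :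
    IsArcMatching r (⋃ p, M p) := by
  refine ⟨fun e he => ?_, fun e he f hf hef => ?_⟩
  · obtain ⟨p, hep⟩ := Set.mem_iUnion.1 he
    exact ((hM p).1 e hep).2.2
  · obtain ⟨p, hep⟩ := Set.mem_iUnion.1 he
    obtain ⟨q, hfq⟩ := Set.mem_iUnion.1 hf
    rcases eq_or_ne p q with rfl | hpq
    · exact (hM p).2 hep hfq hef
    · exact .of_mem_fiber_prod_fiber hpq ((hM p).subset_prod hep) ((hM q).subset_prod hfq)

theorem ReversedArc.apply_le [Preorder P] {N : Set (V × V)} (hφ : ∀ a b, r a b → φ b ≤ φ a)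
    (hN : ∀ e ∈ N, φ e.1 ≤ φ e.2) {a b : V} (hab : ReversedArc r N a b) : φ b ≤ φ a :=
  hab.elim (fun h => hφ a b h.1) (hN (b, a))

theorem apply_le_of_transGen [Preorder P] (hφ : ∀ a b, r a b → φ b ≤ φ a) {a b : V}
    (hab : Relation.TransGen r a b) : φ b ≤ φ a := by
  induction hab with
  | single h => exact hφ _ _ h
  | tail _ h ih => exact (hφ _ _ h).trans ih

theorem transGen_inducedArc_fiber [PartialOrder P] (hφ : ∀ a b, r a b → φ b ≤ φ a) {a b : V}
    (hab : Relation.TransGen r a b) (hle : φ a ≤ φ b) :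
    Relation.TransGen (InducedArc r (φ ⁻¹' {φ a})) a b := by
  induction hab with
  | single h => exact .single ⟨rfl, (hφ _ _ h).antisymm hle, h⟩
  | @tail c d hac hcd ih =>
    have hc : φ c = φ a := (apply_le_of_transGen hφ hac).antisymm (hle.trans (hφ c d hcd))
    have hd : φ d = φ a := (apply_le_of_transGen hφ (hac.tail hcd)).antisymm hle
    exact (ih hc.ge).tail ⟨hc, hd, hcd⟩

theorem patchwork_general [PartialOrder P] (hφ : ∀ a b, r a b → φ b ≤ φ a)
    (hM : ∀ p, IsAcyclicArcMatching (InducedArc r (φ ⁻¹' {p})) (M p)) :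
    IsAcyclicArcMatching r (⋃ p, M p) := by
  have hfiber (p : P) : M p ⊆ (φ ⁻¹' {p}) ×ˢ (φ ⁻¹' {p}) := (hM p).1.subset_prod
  have apply_eq : ∀ e ∈ ⋃ p, M p, φ e.1 = φ e.2 := fun e he => by
    obtain ⟨p, hep⟩ := Set.mem_iUnion.1 he
    exact (hfiber p hep).1.trans (hfiber p hep).2.symm
  refine ⟨.iUnion_fiber fun p => (hM p).1, fun a hcycle => (hM (φ a)).2 a ?_⟩
  have hcycle_fiber := transGen_inducedArc_fiber
    (fun _ _ hab => hab.apply_le hφ fun e he => (apply_eq e he).le) hcycle le_rfl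
  rwa [← reversedArc_inducedArc, iUnion_inter_fiber_prod_fiber hfiber] at hcycle_fiber

end ArcMatching

/-- Patchwork theorem: if `φ : X → P` is order-preserving and, for every
    `p ∈ P`, `M p` is an acyclic matching on the fiber `φ⁻¹(p)` (its arcs are arcs of
    `H(X)` with both endpoints in the fiber, and reversing them in the induced
    subgraph of `H(X)` on the fiber creates no directed cycle), then the union of the
    matchings `M p` is an acyclic matching on `X`. -/
theorem patchwork {U : Type*} [DecidableEq U] {P : Type*} [PartialOrder P]
    (X : Finset (Finset U)) (hX : IsComplex X)
    (φ : Finset U → P)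
    (hφ : ∀ σ ∈ X, ∀ τ ∈ X, σ ⊆ τ → φ σ ≤ φ τ)
    (M : P → Set (Finset U × Finset U))
    (harc : ∀ p : P, ∀ q ∈ M p, HasseArc X q.1 q.2 ∧ φ q.1 = p ∧ φ q.2 = p)
    (hmatch : ∀ p : P, ∀ a ∈ M p, ∀ b ∈ M p, a ≠ b →
      a.1 ≠ b.1 ∧ a.1 ≠ b.2 ∧ a.2 ≠ b.1 ∧ a.2 ≠ b.2)
    (hacyclic : ∀ p : P, ∀ a : Finset U,
      ¬ Relation.TransGen
          (fun a b => φ a = p ∧ φ b = p ∧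
            ((HasseArc X a b ∧ (a, b) ∉ M p) ∨ (b, a) ∈ M p)) a a) :
    IsAcyclicMatching X {q | ∃ p : P, q ∈ M p} := by
  have hfiber (p : P) : M p ⊆ (φ ⁻¹' {p}) ×ˢ (φ ⁻¹' {p}) := fun q hq => (harc p q hq).2
  rw [Set.ofPred_exists]
  exact patchwork_general (fun σ τ h => hφ τ h.2.1 σ h.1 h.2.2.1.subset) fun p =>
    ⟨⟨fun q hq => and_rotate.1 (harc p q hq), hmatch p⟩,
      reversedArc_inducedArc_of_subset (hfiber p) ▸ hacyclic p⟩
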